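/- Let q ∈ ℂ with 0 < |q| < 1, let n ≥ 1 be an integer, and let a, c, b_1, …, b_n, d_1, …, d_n, x_1, …, x_n ∈ ℂ with a ≠ 0, x_j ≠ 0 and b_j ≠ 0 for all j, a ≠ q^{m+1} and b_j ≠ q^{m+1} for all integers m ≥ 0, c ≠ q^m and d_j ≠ q^m for all integers m, and let r be a real number with max(|c/a|, |x_1|, …, |x_n|) < r < min(1, |x_1 b_1/d_1|, …, |x_n b_n/d_n|). Then the multiple bilateral series ∑_{(k_1,…,k_n) ∈ ℤ^n} ((a;q)_{k_1+⋯+k_n} / (c;q)_{k_1+⋯+k_n}) · ∏_{j=1}^n (b_j;q)_{k_j} / (d_j;q)_{k_j} · x_j^{k_j} converges absolutely and equals (2πi)^{−1} ∮_{|t|=r} G(t) · dt/t, the contour being the positively oriented circle of radius r about the origin, where G(t) = [(q;q)_∞ (c/a;q)_∞ (at;q)_∞ (q/(at);q)_∞ / ((c;q)_∞ (q/a;q)_∞ (t;q)_∞ (c/(at);q)_∞)] · ∏_{j=1}^n (q;q)_∞ (d_j/b_j;q)_∞ (b_j x_j/t;q)_∞ (qt/(b_j x_j);q)_∞ / ((d_j;q)_∞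 (q/b_j;q)_∞ (x_j/t;q)_∞ (d_j t/(b_j x_j);q)_∞). -/

import Mathlib

open Finset

/-- The `q`-shifted factorial `(a;q)_n` for an arbitrary integer `n`. -/
noncomputable def qpoch (q a : ℂ) (n : ℤ) : ℂ :=
  if 0 ≤ n then ∏ i ∈ Finset.range n.toNat, (1 - a * q ^ (i : ℤ))
  else (∏ i ∈ Finset.range (-n).toNat, (1 - a * q ^ (n + (i : ℤ))))⁻¹

/-- The infinite `q`-shifted factorial `(a;q)_∞`. -/
noncomputable def qinf (q a : ℂ) : ℂ := ∏' i : ℕ, (1 - a * q ^ i)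

/-- General term of the multiple bilateral series. -/
noncomputable def bilateralTerm (q a c : ℂ) {n : ℕ} (b d x : Fin n → ℂ) :
    (Fin n → ℤ) → ℂ := fun k =>
  qpoch q a (∑ j, k j) / qpoch q c (∑ j, k j) *
    ∏ j, qpoch q (b j) (k j) / qpoch q (d j) (k j) * x j ^ k j

/-- The integrand of the contour-integral representation of the bilateral series. -/
noncomputable def bilateralIntegrand (q a c : ℂ) {n : ℕ} (b d x : Fin n → ℂ) (t : ℂ) : ℂ :=
  qinf q q * qinf q (c / a) * qinf q (a * t) * qinf q (q / (a * t)) /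
    (qinf q c * qinf q (q / a) * qinf q t * qinf q (c / (a * t))) *
    ∏ j, qinf q q * qinf q (d j / b j) * qinf q (b j * x j / t) * qinf q (q * t / (b j * x j)) /
      (qinf q (d j) * qinf q (q / b j) * qinf q (x j / t) * qinf q (d j * t / (b j * x j)))


/-- Finite `q`-shifted factorial with natural index. -/
noncomputable def fp (q a : ℂ) (n : ℕ) : ℂ := ∏ i ∈ Finset.range n, (1 - a * q ^ i)

lemma fp_zero (q a : ℂ) : fp q a 0 = 1 := by simp [fp]

lemma fp_succ (q a : ℂ) (n : ℕ) : fp q a (n + 1) = fp q a n * (1 - a * q ^ n) := by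
  simp [fp, Finset.prod_range_succ]

lemma fp_ne_zero {q a : ℂ} (h : ∀ i : ℕ, 1 - a * q ^ i ≠ 0) (n : ℕ) : fp q a n ≠ 0 :=
  Finset.prod_ne_zero_iff.mpr fun i _ => h i

lemma fp_add (q a : ℂ) (m n : ℕ) : fp q a (m + n) = fp q a m * fp q (a * q ^ m) n := by
  simp only [fp, Finset.prod_range_add]
  congr 1
  refine Finset.prod_congr rfl fun i _ => ?_
  rw [pow_add]; ring

/-- Summand of the balanced (Saalschuetz) sum. -/
noncomputable def saalT (q a b c z : ℂ) (m l : ℕ) : ℂ :=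
  fp q a m * fp q b m * fp q z l * z ^ m / (fp q c m * fp q q m * fp q q l)

lemma saal_telescope (q a b c z : ℂ) (hq : q ≠ 0) (hqq : ∀ i : ℕ, 1 - q * q ^ i ≠ 0)
    (hc : ∀ i : ℕ, 1 - c * q ^ i ≠ 0) (habz : c = a * b * z) (N m : ℕ) (hm : m ≤ N + 1) :
    ∑ j ∈ Finset.range m, (saalT q a b c z j (N + 1 - j) * ((1 - q ^ (N + 1)) * (1 - c * q ^ N))
      - saalT q a b c z j (N - j) * ((1 - b * z * q ^ N) * (1 - a * z * q ^ N))) =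
    - (q ^ (N + 1 - m) * (1 - q ^ m) * (1 - c * q ^ m / q)) * saalT q a b c z m (N + 1 - m) := by
  induction m with
  | zero => simp
  | succ m ih =>
    rw [Finset.sum_range_succ, ih (by omega)]
    obtain ⟨l, rfl⟩ : ∃ l, N = m + l := ⟨N - m, by omega⟩
    have e1 : m + l + 1 - m = l + 1 := by omega
    have e2 : m + l - m = l := by omega
    have e3 : m + l + 1 - (m + 1) = l := by omega
    rw [e1, e2, e3]
    simp only [saalT, fp_succ]
    have h1 := hc m
    have h2 := hqq m
    have h3 := hqq l
    have k1 := fp_ne_zero hc m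
    have k2 := fp_ne_zero hqq m
    have k3 := fp_ne_zero hqq l
    generalize fp q a m = A at *
    generalize fp q b m = B at *
    generalize fp q c m = C at *
    generalize fp q q m = Q at *
    generalize fp q q l = Q' at *
    generalize fp q z l = Z at *
    simp only [pow_add, pow_one]
    generalize q ^ m = u at *
    generalize q ^ l = v at *
    generalize z ^ m = zz at *
    generalize hD1 : 1 - c * u = D1 at *
    generalize hD2 : 1 - q * u = D2 at *
    generalize hD3 : 1 - q * v = D3 at *
    field_simp
    rw [← hD1, ← hD2, ← hD3, habz]
    ring

lemma saal (q a b c z : ℂ) (hq : q ≠ 0) (hqq : ∀ i : ℕ, 1 - q * q ^ i ≠ 0)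
    (hc : ∀ i : ℕ, 1 - c * q ^ i ≠ 0) (habz : c = a * b * z) (N : ℕ) :
    ∑ j ∈ Finset.range (N + 1), saalT q a b c z j (N - j) =
      fp q (b * z) N * fp q (a * z) N / (fp q q N * fp q c N) := by
  induction N with
  | zero => simp [saalT, fp_zero]
  | succ N ih =>
    have key := saal_telescope q a b c z hq hqq hc habz N (N + 1) le_rfl
    rw [Finset.sum_sub_distrib, ← Finset.sum_mul, ← Finset.sum_mul, ih] at key
    rw [Finset.sum_range_succ]
    have h1 := hc N
    have h2 := hqq N
    have k1 := fp_ne_zero hc N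
    have k2 := fp_ne_zero hqq N
    have h2' : 1 - q ^ (N + 1) ≠ 0 := by rw [pow_succ']; exact h2
    have hne : (1 - q ^ (N + 1)) * (1 - c * q ^ N) ≠ 0 := mul_ne_zero h2' h1
    apply mul_right_cancel₀ hne
    rw [add_mul]
    rw [sub_eq_iff_eq_add] at key
    rw [key]
    have e : c * q ^ (N + 1) / q = c * q ^ N := by rw [pow_succ]; field_simp
    rw [e, Nat.sub_self, pow_zero, fp_succ, fp_succ, fp_succ q q, fp_succ q c]
    have e2 : 1 - q ^ (N + 1) = 1 - q * q ^ N := by rw [pow_succ']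
    rw [e2]
    generalize 1 - c * q ^ N = D1 at *
    generalize 1 - q * q ^ N = D2 at *
    field_simp
    ring

lemma qpoch_nat (q a : ℂ) (n : ℕ) : qpoch q a (n : ℤ) = fp q a n := by
  simp [qpoch, fp]

lemma qpoch_neg (q a : ℂ) (hq : q ≠ 0) (m : ℕ) :
    qpoch q a (-(m : ℤ)) = (fp q (a * q ^ (-(m : ℤ))) m)⁻¹ := by
  rcases Nat.eq_zero_or_pos m with rfl | hm
  · simp [qpoch, fp]
  · have : ¬ (0 : ℤ) ≤ -(m : ℤ) := by omega
    rw [qpoch, if_neg this, fp]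
    congr 1
    rw [neg_neg, Int.toNat_natCast]
    refine Finset.prod_congr rfl fun i _ => ?_
    rw [zpow_add₀ hq, zpow_natCast]; ring

lemma one_sub_ne {q a : ℂ} (_hq : q ≠ 0) {m : ℤ} (h : a ≠ q ^ (-m)) : 1 - a * q ^ m ≠ 0 := by
  intro h0
  apply h
  rw [zpow_neg]
  exact eq_inv_of_mul_eq_one_left (sub_eq_zero.mp h0).symm

lemma fp_neg_ne {q a : ℂ} (hq : q ≠ 0) (haq : ∀ m : ℕ, a ≠ q ^ (m + 1)) (m : ℕ) :
    fp q (a * q ^ (-(m : ℤ))) m ≠ 0 := by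
  refine Finset.prod_ne_zero_iff.mpr fun i hi => ?_
  have hi' := Finset.mem_range.mp hi
  obtain ⟨l, rfl⟩ : ∃ l, m = i + (l + 1) := ⟨m - i - 1, by omega⟩
  have := one_sub_ne (m := -((l : ℤ) + 1)) hq (a := a) (by
    rw [neg_neg]; exact_mod_cast haq l)
  convert this using 2
  rw [mul_assoc, ← zpow_natCast q i, ← zpow_add₀ hq]
  congr 2
  push_cast; ring

lemma qpoch_shift {q a : ℂ} (hq : q ≠ 0) (haq : ∀ m : ℕ, a ≠ q ^ (m + 1)) (n j : ℕ) :
    fp q (a * q ^ (-(n : ℤ))) j = fp q (a * q ^ (-(n : ℤ))) n * qpoch q a ((j : ℤ) - n) := by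
  rcases le_total n j with h | h
  · obtain ⟨m, rfl⟩ := Nat.exists_eq_add_of_le h
    have : ((n + m : ℕ) : ℤ) - n = (m : ℤ) := by push_cast; ring
    rw [this, qpoch_nat, fp_add]
    congr 2
    rw [mul_assoc, ← zpow_natCast q n, ← zpow_add₀ hq]; simp
  · obtain ⟨m, rfl⟩ := Nat.exists_eq_add_of_le h
    have : (j : ℤ) - (j + m : ℕ) = -(m : ℤ) := by push_cast; ring
    rw [this, qpoch_neg q a hq, fp_add q _ j m]
    have e : a * q ^ (-((j + m : ℕ) : ℤ)) * q ^ j = a * q ^ (-(m : ℤ)) := by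
      rw [mul_assoc, ← zpow_natCast q j, ← zpow_add₀ hq]; congr 2; push_cast; ring
    rw [e, mul_inv_cancel_right₀ (fp_neg_ne hq haq m)]

lemma fp_reflect {q a : ℂ} (hq : q ≠ 0) (ha : a ≠ 0) (n : ℕ) :
    fp q (a * q ^ (-(n : ℤ))) n =
      a ^ n * (∏ i ∈ Finset.range n, (-(q ^ (i + 1))⁻¹)) * fp q (q / a) n := by
  rw [fp, ← Finset.prod_range_reflect, fp]
  have : a ^ n = ∏ i ∈ Finset.range n, a := by simp
  rw [this, ← Finset.prod_mul_distrib, ← Finset.prod_mul_distrib]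
  refine Finset.prod_congr rfl fun i hi => ?_
  have hi' := Finset.mem_range.mp hi
  obtain ⟨l, rfl⟩ : ∃ l, n = i + (l + 1) := ⟨n - i - 1, by omega⟩
  have e : i + (l + 1) - 1 - i = l := by omega
  have e2 : q ^ (-((i + (l + 1) : ℕ) : ℤ)) * q ^ l = (q ^ (i + 1))⁻¹ := by
    rw [← zpow_natCast q l, ← zpow_natCast q (i + 1), ← zpow_add₀ hq, ← zpow_neg]
    congr 1; push_cast; ring
  rw [e, mul_assoc, e2]
  field_simp
  ring

lemma bil_finite (q a c z : ℂ) (hq : q ≠ 0) (hqq : ∀ i : ℕ, 1 - q * q ^ i ≠ 0)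
    (ha : a ≠ 0) (hz : z ≠ 0) (haq : ∀ m : ℕ, a ≠ q ^ (m + 1))
    (hcq : ∀ m : ℤ, c ≠ q ^ m) (n : ℕ) :
    ∑ j ∈ Finset.range (2 * n + 1),
      (qpoch q a ((j : ℤ) - n) / qpoch q c ((j : ℤ) - n) * z ^ ((j : ℤ) - n)) *
        (fp q (c / (a * z)) j / fp q q j * (fp q z (2 * n - j) / fp q q (2 * n - j))) =
      fp q (c / a) (2 * n) * fp q (a * z) n * fp q (q / (a * z)) n /
        (fp q q (2 * n) * fp q c n * fp q (q / a) n) := by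
  have hcq' : ∀ m : ℕ, c ≠ q ^ (m + 1) := fun m => by exact_mod_cast hcq (m + 1)
  have hc' : ∀ i : ℕ, 1 - c * q ^ (-(n : ℤ)) * q ^ i ≠ 0 := fun i => by
    have := one_sub_ne (m := -(n : ℤ) + i) hq (hcq _)
    rwa [zpow_add₀ hq, ← mul_assoc, zpow_natCast] at this
  have S := saal q (a * q ^ (-(n : ℤ))) (c / (a * z)) (c * q ^ (-(n : ℤ))) z hq hqq hc'
    (by field_simp) (2 * n)
  have hA := fp_neg_ne hq haq n
  have hC := fp_neg_ne hq hcq' n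
  have hzn : z ^ n ≠ 0 := pow_ne_zero _ hz
  have hterm : ∀ j ∈ Finset.range (2 * n + 1),
      saalT q (a * q ^ (-(n : ℤ))) (c / (a * z)) (c * q ^ (-(n : ℤ))) z j (2 * n - j) =
      (fp q (a * q ^ (-(n : ℤ))) n / fp q (c * q ^ (-(n : ℤ))) n * z ^ n) *
      ((qpoch q a ((j : ℤ) - n) / qpoch q c ((j : ℤ) - n) * z ^ ((j : ℤ) - n)) *
        (fp q (c / (a * z)) j / fp q q j * (fp q z (2 * n - j) / fp q q (2 * n - j)))) := by
    intro j _
    have e : z ^ j = z ^ n * z ^ ((j : ℤ) - n) := by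
      rw [← zpow_natCast z n, ← zpow_add₀ hz, ← zpow_natCast]; congr 1; ring
    rw [saalT, qpoch_shift hq haq n j, qpoch_shift hq hcq' n j, e]
    simp only [div_eq_mul_inv, mul_inv]
    ring
  rw [Finset.sum_congr rfl hterm, ← Finset.mul_sum] at S
  have e1 : c / (a * z) * z = c / a := by field_simp
  have e2 : a * q ^ (-(n : ℤ)) * z = a * z * q ^ (-(n : ℤ)) := by ring
  have e3 : ∀ y : ℂ, y * q ^ (-(n : ℤ)) * q ^ n = y := fun y => by
    rw [mul_assoc, ← zpow_natCast q n, ← zpow_add₀ hq]; simp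
  have e4 : ∀ y : ℂ, fp q (y * q ^ (-(n : ℤ))) (2 * n) =
      fp q (y * q ^ (-(n : ℤ))) n * fp q y n := fun y => by
    rw [two_mul, fp_add, e3]
  rw [e1, e2, e4, e4] at S
  have hne : fp q (a * q ^ (-(n : ℤ))) n / fp q (c * q ^ (-(n : ℤ))) n * z ^ n ≠ 0 :=
    mul_ne_zero (div_ne_zero hA hC) hzn
  apply mul_left_cancel₀ hne
  rw [S]
  rw [fp_reflect hq ha n] at hA ⊢
  rw [fp_reflect hq (mul_ne_zero ha hz) n]
  have h1 : fp q (q / a) n ≠ 0 := right_ne_zero_of_mul hA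
  have h2 := fp_ne_zero hqq (2 * n)
  have h3 : fp q c n ≠ 0 := fp_ne_zero (fun i => by
    have := one_sub_ne (m := (i : ℤ)) hq (hcq _)
    rwa [zpow_natCast] at this) n
  rw [mul_pow]
  generalize fp q (c * q ^ (-(n : ℤ))) n = C at *
  generalize ∏ i ∈ Finset.range n, (-(q ^ (i + 1))⁻¹) = P at *
  field_simp

lemma summable_q {q : ℂ} (hq1 : ‖q‖ < 1) (a : ℂ) : Summable fun i : ℕ => ‖-(a * q ^ i)‖ := by
  simp only [norm_neg, norm_mul, norm_pow]
  exact (summable_geometric_of_lt_one (norm_nonneg _) hq1).mul_left _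

lemma fp_tendsto {q : ℂ} (hq1 : ‖q‖ < 1) (a : ℂ) :
    Filter.Tendsto (fp q a) Filter.atTop (nhds (qinf q a)) := by
  have := (multipliable_one_add_of_summable (summable_q hq1 a)).hasProd.tendsto_prod_nat
  simp only [← sub_eq_add_neg] at this
  exact this

lemma qinf_ne_zero {q a : ℂ} (hq1 : ‖q‖ < 1) (h : ∀ i : ℕ, 1 - a * q ^ i ≠ 0) :
    qinf q a ≠ 0 := by
  have := tprod_one_add_ne_zero_of_summable (f := fun i : ℕ => -(a * q ^ i))
    (fun i => by rw [← sub_eq_add_neg]; exact h i) (summable_q hq1 a)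
  simpa [qinf, ← sub_eq_add_neg] using this

lemma one_sub_ne_of_norm {q a : ℂ} (hq1 : ‖q‖ < 1) (h : ‖a‖ < 1) (i : ℕ) :
    1 - a * q ^ i ≠ 0 := by
  intro h0
  have h1 : a * q ^ i = 1 := (sub_eq_zero.mp h0).symm
  have h2 : ‖a * q ^ i‖ < 1 := by
    rw [norm_mul, norm_pow]
    calc _ ≤ ‖a‖ * 1 := by
          gcongr
          exact pow_le_one₀ (norm_nonneg _) hq1.le
      _ < 1 := by simpa using h
  rw [h1] at h2
  simp at h2

lemma ratio_summable {f : ℕ → ℂ} {g : ℕ → ℂ} {l : ℂ} (hl : ‖l‖ < 1)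
    (hg : Filter.Tendsto g Filter.atTop (nhds l)) (hf : ∀ n, f (n + 1) = g n * f n) :
    Summable f := by
  obtain ⟨ρ, h1, h2⟩ := exists_between hl
  refine summable_of_ratio_norm_eventually_le (r := ρ) h2 ?_
  filter_upwards [hg.norm.eventually_lt_const h1] with n hn
  rw [hf, norm_mul]
  gcongr

lemma psi_summable {q a c z : ℂ} (hq : q ≠ 0) (hq1 : ‖q‖ < 1)
    (ha : a ≠ 0) (hz : z ≠ 0) (haq : ∀ m : ℕ, a ≠ q ^ (m + 1))
    (hcq : ∀ m : ℤ, c ≠ q ^ m) (hz1 : ‖z‖ < 1) (hcz : ‖c / (a * z)‖ < 1) :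
    Summable fun k : ℤ => qpoch q a k / qpoch q c k * z ^ k := by
  have hcq' : ∀ m : ℕ, c ≠ q ^ (m + 1) := fun m => by exact_mod_cast hcq (m + 1)
  have hpow : Filter.Tendsto (fun n : ℕ => q ^ n) Filter.atTop (nhds 0) :=
    tendsto_pow_atTop_nhds_zero_of_norm_lt_one hq1
  refine Summable.of_nat_of_neg ?_ ?_
  · refine ratio_summable (l := z) (g := fun n => (1 - a * q ^ n) / (1 - c * q ^ n) * z) hz1 ?_ ?_
    · have : Filter.Tendsto (fun n : ℕ => (1 - a * q ^ n) / (1 - c * q ^ n) * z) Filter.atTop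
          (nhds ((1 - a * 0) / (1 - c * 0) * z)) :=
        (((hpow.const_mul a).const_sub 1).div ((hpow.const_mul c).const_sub 1)
          (by simp)).mul_const z
      simpa using this
    · intro n
      rw [qpoch_nat, qpoch_nat, qpoch_nat, qpoch_nat, fp_succ, fp_succ, zpow_natCast,
        zpow_natCast, pow_succ]
      simp only [div_eq_mul_inv, mul_inv]
      ring
  · refine ratio_summable (l := c / (a * z))
      (g := fun n => (q ^ (n + 1) - c) / (q ^ (n + 1) - a) * z⁻¹) hcz ?_ ?_
    · have h0 := hpow.comp (Filter.tendsto_add_atTop_nat 1)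
      have : Filter.Tendsto (fun n : ℕ => (q ^ (n + 1) - c) / (q ^ (n + 1) - a) * z⁻¹) Filter.atTop
          (nhds ((0 - c) / (0 - a) * z⁻¹)) :=
        ((h0.sub_const c).div (h0.sub_const a) (by simpa using ha)).mul_const z⁻¹
      convert this using 2
      simp only [zero_sub, neg_div_neg_eq]
      field_simp
    · intro n
      have key : ∀ y : ℂ, fp q (y * q ^ (-((n + 1 : ℕ) : ℤ))) (n + 1) =
          fp q (y * q ^ (-(n : ℤ))) n * ((q ^ (n + 1) - y) / q ^ (n + 1)) := by
        intro y
        have e1 : y * q ^ (-((n + 1 : ℕ) : ℤ)) * q ^ 1 = y * q ^ (-(n : ℤ)) := by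
          rw [mul_assoc, ← zpow_natCast q 1, ← zpow_add₀ hq]; congr 2; push_cast; ring
        rw [add_comm n 1, fp_add, add_comm 1 n, e1, mul_comm]
        congr 1
        rw [zpow_neg, zpow_natCast]
        have := pow_ne_zero (n + 1) hq
        simp only [fp, Finset.prod_range_one, pow_zero]
        field_simp
      have hqn := pow_ne_zero (n + 1) hq
      rw [qpoch_neg q a hq, qpoch_neg q a hq, qpoch_neg q c hq, qpoch_neg q c hq, key, key,
        zpow_neg z, zpow_neg z, zpow_natCast z, zpow_natCast z, pow_succ z]
      simp only [div_eq_mul_inv, mul_inv, inv_inv]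
      generalize q ^ (n + 1) = Q at *
      field_simp

lemma bounded_of_tendsto {g : ℕ → ℂ} {l : ℂ} (hg : Filter.Tendsto g Filter.atTop (nhds l)) :
    ∃ C, 0 ≤ C ∧ ∀ n, ‖g n‖ ≤ C := by
  obtain ⟨C, hC⟩ := (Metric.isBounded_range_of_tendsto g hg).exists_norm_le
  exact ⟨C, (norm_nonneg _).trans (hC (g 0) ⟨0, rfl⟩), fun n => hC _ ⟨n, rfl⟩⟩

/-- Ramanujan's `₁ψ₁` summation. -/
lemma psi_sum {q a c z : ℂ} (hq : q ≠ 0) (hq1 : ‖q‖ < 1)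
    (ha : a ≠ 0) (hz : z ≠ 0) (haq : ∀ m : ℕ, a ≠ q ^ (m + 1))
    (hcq : ∀ m : ℤ, c ≠ q ^ m) (hz1 : ‖z‖ < 1) (hcz : ‖c / (a * z)‖ < 1) :
    ∑' k : ℤ, qpoch q a k / qpoch q c k * z ^ k =
      qinf q q * qinf q (c / a) * qinf q (a * z) * qinf q (q / (a * z)) /
        (qinf q c * qinf q (q / a) * qinf q z * qinf q (c / (a * z))) := by
  have hs := psi_summable hq hq1 ha hz haq hcq hz1 hcz
  have hqq := one_sub_ne_of_norm hq1 hq1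
  have nq := qinf_ne_zero hq1 hqq
  have nz := qinf_ne_zero hq1 (one_sub_ne_of_norm hq1 hz1)
  have nb := qinf_ne_zero hq1 (one_sub_ne_of_norm hq1 hcz)
  have nc : qinf q c ≠ 0 := qinf_ne_zero hq1 (fun i => by
    have := one_sub_ne (m := (i : ℤ)) hq (hcq _)
    rwa [zpow_natCast] at this)
  have na : qinf q (q / a) ≠ 0 := qinf_ne_zero hq1 (fun i h0 => by
    apply haq i
    field_simp at h0
    rw [pow_succ']
    simpa [sub_eq_zero] using h0)
  set α : ℤ → ℂ := fun k => qpoch q a k / qpoch q c k * z ^ k with hα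
  set φ : ℕ → ℂ := fun m => fp q (c / (a * z)) m / fp q q m with hφ
  set ψ : ℕ → ℂ := fun m => fp q z m / fp q q m with hψ
  have tφ : Filter.Tendsto φ Filter.atTop (nhds (qinf q (c / (a * z)) / qinf q q)) :=
    (fp_tendsto hq1 _).div (fp_tendsto hq1 _) nq
  have tψ : Filter.Tendsto ψ Filter.atTop (nhds (qinf q z / qinf q q)) :=
    (fp_tendsto hq1 _).div (fp_tendsto hq1 _) nq
  obtain ⟨C1, hC1, bφ⟩ := bounded_of_tendsto tφ
  obtain ⟨C2, hC2, bψ⟩ := bounded_of_tendsto tψ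
  let F : ℕ → ℤ → ℂ := fun n k =>
    if k ∈ Finset.Icc (-(n : ℤ)) n then α k * (φ (n + k).toNat * ψ (n - k).toNat) else 0
  have hF : ∀ n, ∑' k, F n k = fp q (c / a) (2 * n) * fp q (a * z) n * fp q (q / (a * z)) n /
        (fp q q (2 * n) * fp q c n * fp q (q / a) n) := by
    intro n
    rw [← bil_finite q a c z hq hqq ha hz haq hcq n,
      tsum_eq_sum (s := Finset.Icc (-(n : ℤ)) n) (fun k hk => if_neg hk)]
    symm
    refine Finset.sum_nbij' (fun j : ℕ => (j : ℤ) - n) (fun k : ℤ => (n + k).toNat) ?_ ?_ ?_ ?_ ?_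
    · intro j hj
      simp only [Finset.mem_range, Finset.mem_Icc] at *
      omega
    · intro j hj
      simp only [Finset.mem_range, Finset.mem_Icc] at *
      omega
    · intro j hj
      simp only [Finset.mem_range] at *
      omega
    · intro j hj
      simp only [Finset.mem_Icc] at *
      omega
    · intro j hj
      have hj' := Finset.mem_range.mp hj
      have h1 : (j : ℤ) - n ∈ Finset.Icc (-(n : ℤ)) n := by
        simp only [Finset.mem_Icc]; omega
      have h2 : ((n : ℤ) + ((j : ℤ) - n)).toNat = j := by omega
      have h3 : ((n : ℤ) - ((j : ℤ) - n)).toNat = 2 * n - j := by omega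
      rw [if_pos h1, h2, h3]
  have t1 : Filter.Tendsto (fun n => ∑' k, F n k) Filter.atTop
      (nhds (∑' k, α k * (qinf q (c / (a * z)) / qinf q q * (qinf q z / qinf q q)))) := by
    refine tendsto_tsum_of_dominated_convergence (bound := fun k => ‖α k‖ * (C1 * C2))
      (hs.norm.mul_right _) ?_ ?_
    · intro k
      have l1 : Filter.Tendsto (fun n : ℕ => ((n : ℤ) + k).toNat) Filter.atTop Filter.atTop := by
        refine Filter.tendsto_atTop.2 fun B => ?_
        filter_upwards [Filter.eventually_ge_atTop (B + k.natAbs)] with n hn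
        omega
      have l2 : Filter.Tendsto (fun n : ℕ => ((n : ℤ) - k).toNat) Filter.atTop Filter.atTop := by
        refine Filter.tendsto_atTop.2 fun B => ?_
        filter_upwards [Filter.eventually_ge_atTop (B + k.natAbs)] with n hn
        omega
      have l3 := ((tφ.comp l1).mul (tψ.comp l2)).const_mul (α k)
      refine l3.congr' ?_
      filter_upwards [Filter.eventually_ge_atTop k.natAbs] with n hn
      have : k ∈ Finset.Icc (-(n : ℤ)) n := by
        simp only [Finset.mem_Icc]; omega
      simp only [F, if_pos this, Function.comp]
    · refine Filter.Eventually.of_forall fun n k => ?_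
      simp only [F]
      split_ifs
      · rw [norm_mul, norm_mul (φ _)]
        exact mul_le_mul_of_nonneg_left (mul_le_mul (bφ _) (bψ _) (norm_nonneg _) hC1)
          (norm_nonneg _)
      · simp only [norm_zero]; positivity
  have two : Filter.Tendsto (fun n : ℕ => 2 * n) Filter.atTop Filter.atTop :=
    Filter.tendsto_atTop.2 fun B => by
      filter_upwards [Filter.eventually_ge_atTop B] with n hn
      omega
  have t2 : Filter.Tendsto (fun n => ∑' k, F n k) Filter.atTop
      (nhds (qinf q (c / a) * qinf q (a * z) * qinf q (q / (a * z)) /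
        (qinf q q * qinf q c * qinf q (q / a)))) := by
    simp only [hF]
    exact ((((fp_tendsto hq1 _).comp two).mul (fp_tendsto hq1 _)).mul (fp_tendsto hq1 _)).div
      ((((fp_tendsto hq1 _).comp two).mul (fp_tendsto hq1 _)).mul (fp_tendsto hq1 _))
      (mul_ne_zero (mul_ne_zero nq nc) na)
  have e := tendsto_nhds_unique t1 t2
  rw [tsum_mul_right] at e
  generalize ∑' k, α k = S at *
  generalize qinf q (c / (a * z)) = B at *
  generalize qinf q (q / (a * z)) = B' at *
  generalize qinf q (q / a) = A at *
  field_simp at e ⊢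
  linear_combination e

lemma mul_norm_aux {ι κ : Type*} (f : ι → ℂ) (g : κ → ℂ) (hf : Summable fun i => ‖f i‖)
    (hg : Summable fun i => ‖g i‖) :
    (Summable fun p : ι × κ => ‖f p.1 * g p.2‖) ∧
      ∑' p : ι × κ, f p.1 * g p.2 = (∑' i, f i) * ∑' k, g k :=
  ⟨Summable.mul_norm hf hg, (tsum_mul_tsum_of_summable_norm hf hg).symm⟩

lemma pi_prod_sum (n : ℕ) (f : Fin n → ℤ → ℂ) (hf : ∀ j, Summable fun k => ‖f j k‖) :
    (Summable fun k : Fin n → ℤ => ‖∏ j, f j (k j)‖) ∧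
      ∑' k : Fin n → ℤ, ∏ j, f j (k j) = ∏ j, ∑' k, f j k := by
  induction n with
  | zero =>
    refine ⟨(hasSum_fintype _).summable, ?_⟩
    simp
  | succ n ih =>
    obtain ⟨h1, h2⟩ := ih (fun j => f j.succ) (fun j => hf _)
    let e : ℤ × (Fin n → ℤ) ≃ (Fin (n + 1) → ℤ) := Fin.consEquiv (fun _ : Fin (n + 1) => ℤ)
    have he : ∀ p : ℤ × (Fin n → ℤ), ∏ j, f j (e p j) = f 0 p.1 * ∏ j, f j.succ (p.2 j) := by
      intro p
      rw [Fin.prod_univ_succ]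
      rfl
    clear_value e
    have h1' : Summable fun k : Fin n → ℤ => ‖∏ j : Fin n, f j.succ (k j)‖ := h1
    have hf0 : Summable fun k => ‖f 0 k‖ := hf 0
    obtain ⟨h3, h4⟩ := mul_norm_aux (f 0) (fun k : Fin n → ℤ => ∏ j : Fin n, f j.succ (k j)) hf0 h1'
    constructor
    · refine e.summable_iff.mp ?_
      refine h3.congr fun p => ?_
      simp only [Function.comp_def, he]
    · rw [← e.tsum_eq]
      simp only [he]
      rw [Fin.prod_univ_succ, ← h2]
      exact h4

lemma circle_hasSum {ι : Type*} [Countable ι] (C : ι → ℂ) (e : ι → ℤ) {R : ℝ} (hR : 0 < R)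
    (hs : Summable fun i => ‖C i‖ * R ^ e i) (g : ℂ → ℂ)
    (hg : ∀ t : ℂ, ‖t‖ = R → HasSum (fun i => C i * t ^ e i) (g t)) :
    HasSum (fun i => if e i = 0 then C i else 0)
      ((2 * (Real.pi : ℂ) * Complex.I)⁻¹ * ∮ t in C(0, R), g t / t) := by
  have hpi : (2 * (Real.pi : ℂ) * Complex.I) ≠ 0 := Complex.two_pi_I_ne_zero
  have main : HasSum (fun i => ∮ t in C(0, R), C i * t ^ e i / t) (∮ t in C(0, R), g t / t) := by
    refine intervalIntegral.hasSum_integral_of_dominated_convergence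
      (fun i _ => ‖C i‖ * R ^ e i) (fun i => ?_) (fun i => ?_) ?_ ?_ ?_
    · simp only [deriv_circleMap, smul_eq_mul]
      apply Measurable.aestronglyMeasurable
      have : Measurable fun θ : ℝ => circleMap 0 R θ := (continuous_circleMap 0 R).measurable
      fun_prop
    · refine Filter.Eventually.of_forall fun θ _ => ?_
      simp only [deriv_circleMap, smul_eq_mul, norm_mul, norm_div, norm_zpow, norm_circleMap_zero,
        Complex.norm_I, abs_of_pos hR, mul_one]
      apply le_of_eq
      field_simp
    · exact Filter.Eventually.of_forall fun _ _ => hs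
    · exact intervalIntegrable_const
    · refine Filter.Eventually.of_forall fun θ _ => HasSum.const_smul _ ?_
      exact (hg _ (by simp [abs_of_pos hR])).div_const _
  have := main.mul_left (2 * (Real.pi : ℂ) * Complex.I)⁻¹
  suffices h : ∀ i, (if e i = 0 then C i else 0) =
      (2 * (Real.pi : ℂ) * Complex.I)⁻¹ * ∮ t in C(0, R), C i * t ^ e i / t by
    simpa only [h] using this
  intro i
  have hcongr : (∮ t in C(0, R), C i * t ^ e i / t) = ∮ t in C(0, R), C i * (t - 0) ^ (e i - 1) := by
    refine circleIntegral.integral_congr hR.le fun t ht => ?_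
    have ht0 : t ≠ 0 := by
      rintro rfl
      simp at ht
      exact hR.ne ht
    simp only [sub_zero]
    rw [zpow_sub_one₀ ht0]; ring
  rw [hcongr, circleIntegral.integral_const_mul]
  split_ifs with h
  · rw [h, zero_sub]
    simp only [zpow_neg_one]
    rw [circleIntegral.integral_sub_inv_of_mem_ball (by simpa using hR)]
    field_simp
  · rw [circleIntegral.integral_sub_zpow_of_ne (by omega)]
    simp

theorem bilateral_sum_eq_contour_integral (q a c : ℂ) (n : ℕ) (hn : 1 ≤ n)
    (b d x : Fin n → ℂ) (r : ℝ)
    (hq0 : 0 < ‖q‖) (hq1 : ‖q‖ < 1)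
    (ha : a ≠ 0) (hx : ∀ j, x j ≠ 0) (hb : ∀ j, b j ≠ 0)
    (haq : ∀ m : ℕ, a ≠ q ^ (m + 1))
    (hbq : ∀ j, ∀ m : ℕ, b j ≠ q ^ (m + 1))
    (hcq : ∀ m : ℤ, c ≠ q ^ m)
    (hdq : ∀ j, ∀ m : ℤ, d j ≠ q ^ m)
    (hrca : ‖c / a‖ < r) (hrx : ∀ j, ‖x j‖ < r)
    (hr1 : r < 1) (hrd : ∀ j, r < ‖x j * b j / d j‖) :
    Summable (fun k : Fin n → ℤ => ‖bilateralTerm q a c b d x k‖) ∧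
    (∑' k : Fin n → ℤ, bilateralTerm q a c b d x k) =
      (2 * (Real.pi : ℂ) * Complex.I)⁻¹ *
        ∮ t in C(0, r), bilateralIntegrand q a c b d x t / t := by
  have hq : q ≠ 0 := norm_pos_iff.mp hq0
  have hr : 0 < r := (norm_nonneg _).trans_lt hrca
  have hd : ∀ j, d j ≠ 0 := fun j h => by
    have := hrd j
    simp [h] at this
    linarith
  -- convergence on the circle
  have hT : ∀ t : ℂ, ‖t‖ = r → t ≠ 0 := fun t ht h => by
    simp [h] at ht; exact hr.ne ht
  have hca : ∀ t : ℂ, ‖t‖ = r → ‖c / (a * t)‖ < 1 := fun t ht => by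
    rw [← div_div, norm_div, ht]
    exact (div_lt_one hr).mpr hrca
  have hx1 : ∀ t : ℂ, ‖t‖ = r → ∀ j, ‖x j / t‖ < 1 := fun t ht j => by
    rw [norm_div, ht]
    exact (div_lt_one hr).mpr (hrx j)
  have hdb : ∀ t : ℂ, ‖t‖ = r → ∀ j, ‖d j / (b j * (x j / t))‖ < 1 := fun t ht j => by
    have h1 := hrd j
    have hdp : 0 < ‖d j‖ := norm_pos_iff.mpr (hd j)
    have hbp : 0 < ‖b j‖ := norm_pos_iff.mpr (hb j)
    have hxp : 0 < ‖x j‖ := norm_pos_iff.mpr (hx j)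
    rw [norm_div, norm_mul, lt_div_iff₀ hdp] at h1
    rw [norm_div, norm_mul, norm_div, ht, div_lt_one (by positivity), ← mul_div_assoc,
      lt_div_iff₀ hr]
    linarith
  set α : ℤ → ℂ := fun K => qpoch q a K / qpoch q c K with hα
  set β : Fin n → ℤ → ℂ := fun j k => qpoch q (b j) k / qpoch q (d j) k with hβ
  have sα : ∀ t : ℂ, ‖t‖ = r → Summable fun K : ℤ => ‖α K * t ^ K‖ := fun t ht =>
    (psi_summable hq hq1 ha (hT t ht) haq hcq (ht ▸ hr1) (hca t ht)).norm
  have sβ : ∀ t : ℂ, ‖t‖ = r → ∀ j, Summable fun k : ℤ => ‖β j k * (x j / t) ^ k‖ := fun t ht j =>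
    (psi_summable hq hq1 (hb j) (div_ne_zero (hx j) (hT t ht)) (hbq j) (hdq j) (hx1 t ht j)
      (hdb t ht j)).norm
  let C : ℤ × (Fin n → ℤ) → ℂ := fun p => α p.1 * ∏ j, (β j (p.2 j) * x j ^ p.2 j)
  let e : ℤ × (Fin n → ℤ) → ℤ := fun p => p.1 - ∑ j, p.2 j
  have hterm : ∀ t : ℂ, ‖t‖ = r → ∀ p : ℤ × (Fin n → ℤ),
      (α p.1 * t ^ p.1) * ∏ j, (β j (p.2 j) * (x j / t) ^ p.2 j) = C p * t ^ e p := by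
    intro t ht p
    have h0 := hT t ht
    have h1 : ∀ s : Finset (Fin n), t ^ (∑ j ∈ s, p.2 j) = ∏ j ∈ s, t ^ p.2 j := by
      intro s
      induction s using Finset.induction_on with
      | empty => simp
      | insert i s hi ih => rw [Finset.sum_insert hi, Finset.prod_insert hi, zpow_add₀ h0, ih]
    have h2 : ∏ j, (β j (p.2 j) * (x j / t) ^ p.2 j) =
        (∏ j, (β j (p.2 j) * x j ^ p.2 j)) / ∏ j, t ^ p.2 j := by
      rw [← Finset.prod_div_distrib]
      refine Finset.prod_congr rfl fun j _ => ?_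
      rw [div_zpow, mul_div_assoc]
    rw [h2, ← h1]
    simp only [C, e]
    rw [zpow_sub₀ h0]
    ring
  have hG : ∀ t : ℂ, ‖t‖ = r → HasSum (fun p => C p * t ^ e p) (bilateralIntegrand q a c b d x t) := by
    intro t ht
    obtain ⟨p1, p2⟩ := pi_prod_sum n (fun j k => β j k * (x j / t) ^ k) (sβ t ht)
    have s := Summable.mul_norm (sα t ht) p1
    have hs := s.of_norm.hasSum
    rw [← tsum_mul_tsum_of_summable_norm (sα t ht) p1, p2] at hs
    simp only [hterm t ht] at hs
    have hval : bilateralIntegrand q a c b d x t =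
        (∑' K, α K * t ^ K) * ∏ j, ∑' k, β j k * (x j / t) ^ k := by
      unfold bilateralIntegrand
      rw [psi_sum hq hq1 ha (hT t ht) haq hcq (ht ▸ hr1) (hca t ht)]
      congr 1
      refine Finset.prod_congr rfl fun j _ => ?_
      rw [psi_sum hq hq1 (hb j) (div_ne_zero (hx j) (hT t ht)) (hbq j) (hdq j) (hx1 t ht j)
        (hdb t ht j)]
      have e1 : b j * (x j / t) = b j * x j / t := by ring
      rw [e1, div_div_eq_mul_div, div_div_eq_mul_div]
    rw [hval]
    exact hs
  have hS : Summable fun p => ‖C p‖ * r ^ e p := by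
    have hrn : ‖(r : ℂ)‖ = r := by simp [abs_of_pos hr]
    have := (hG r hrn).summable.norm
    simpa [norm_mul, norm_zpow, abs_of_pos hr] using this
  have fin := circle_hasSum C e hr hS _ hG
  let ι : (Fin n → ℤ) → ℤ × (Fin n → ℤ) := fun k => (∑ j, k j, k)
  have hι : Function.Injective ι := fun k k' h => (Prod.ext_iff.mp h).2
  have hB : ∀ k, C (ι k) = bilateralTerm q a c b d x k := fun k => rfl
  have he : ∀ k, e (ι k) = 0 := fun k => by simp [e, ι]
  constructor
  · have := hS.comp_injective hι
    simpa [Function.comp_def, he, hB] using this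
  · rw [← hι.hasSum_iff] at fin
    · simp only [Function.comp_def, he, hB, if_true] at fin
      exact fin.tsum_eq
    · intro p hp
      rw [if_neg]
      intro h0
      apply hp
      refine ⟨p.2, Prod.ext ?_ rfl⟩
      simp only [e] at h0
      simp only [ι]
      omega
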